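/- Define Q : ℕ × ℕ → ℝ by Q_{00} = 2, Q_{i0} = 1 for i ≥ 1, Q_{0j} = 0 for j ≥ 1, and Q_{ij} = \binom{i}{j} + \binom{i-1}{j-1} for i, j ≥ 1. Define operators on sequences ℕ → ℝ by: (T₁ x)_n = ∑_{j=0}^{⌊n/2⌋} Q_{n-j, j} x_j (a finite sum), and (T₋₁ x)_0 = 0, (T₋₁ x)_n = ∑_{k=0}^{n-1} (1/2)^{n-k} x_k for n ≥ 1. Let x : ℕ → ℝ and, for a positive integer m, let z = T_{l_m} ∘ T_{l_{m-1}} ∘ ⋯ ∘ T_{l_1} applied to x, where l_i = (-1)^{i+1} (so the first operator applied is T₁ and the operators alternate). Then: if m is odd, ∑_{k=0}^{n} \binom{n}{k}(-1)^k z_k = z_n for every n; if m is even, ∑_{k=0}^{n} \binom{n}{k}(-1)^k z_k = -z_n for every n. -/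

import Mathlib

/-- The matrix `Q = P + [1, 0ᵀ; 0, P]`. -/
noncomputable def Qmat (i j : ℕ) : ℝ :=
  if j = 0 then (if i = 0 then 2 else 1)
  else if i = 0 then 0
  else (Nat.choose i j : ℝ) + (Nat.choose (i - 1) (j - 1) : ℝ)

/-- Multiplication by the matrix `Q↓`: `(T1 x) n = ∑_{j ≤ ⌊n/2⌋} Q (n-j) j * x j`. -/
noncomputable def T1 (x : ℕ → ℝ) (n : ℕ) : ℝ :=
  ∑ j ∈ Finset.range (n / 2 + 1), Qmat (n - j) j * x j

/-- Multiplication by `(-J(0) J(-2)⁻¹)ᵀ`: `(T₋₁ x) 0 = 0` and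
`(T₋₁ x) n = ∑_{k<n} (1/2)^(n-k) x k` for `n ≥ 1` (the empty sum gives the `n = 0` case). -/
noncomputable def Tneg1 (x : ℕ → ℝ) (n : ℕ) : ℝ :=
  ∑ k ∈ Finset.range n, (1 / 2 : ℝ) ^ (n - k) * x k

/-- `applyT m x = T_{l_m} ∘ ⋯ ∘ T_{l_1} x` where `l_i = (-1)^(i+1)`
(so `T1` is applied first and the operators alternate). -/
noncomputable def applyT : ℕ → (ℕ → ℝ) → (ℕ → ℝ)
  | 0, x => x
  | m + 1, x => (if (m + 1) % 2 = 1 then T1 else Tneg1) (applyT m x)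

/-- binomial transform -/
noncomputable def BT (y : ℕ → ℝ) (n : ℕ) : ℝ :=
  ∑ k ∈ Finset.range (n + 1), (Nat.choose n k : ℝ) * (-1) ^ k * y k

lemma BT_succ (y : ℕ → ℝ) (n : ℕ) : BT y (n + 1) = BT y n - BT (fun k => y (k + 1)) n := by
  unfold BT
  rw [Finset.sum_range_succ' _ (n + 1)]
  have h : ∑ k ∈ Finset.range (n + 1), (Nat.choose n k : ℝ) * (-1) ^ k * y k
      = ∑ k ∈ Finset.range (n + 1), (Nat.choose n (k + 1) : ℝ) * (-1) ^ (k + 1) * y (k + 1) + y 0 := by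
    rw [Finset.sum_range_succ', Finset.sum_range_succ _ n]
    simp
  rw [h, add_sub_right_comm, ← Finset.sum_sub_distrib]
  congr 1
  · apply Finset.sum_congr rfl
    intro k _
    rw [Nat.choose_succ_succ]
    push_cast
    ring
  · simp

lemma BT_add (y z : ℕ → ℝ) (n : ℕ) : BT (fun k => y k + z k) n = BT y n + BT z n := by
  unfold BT
  rw [← Finset.sum_add_distrib]
  exact Finset.sum_congr rfl fun k _ => by ring

lemma BT_smul (c : ℝ) (y : ℕ → ℝ) (n : ℕ) : BT (fun k => c * y k) n = c * BT y n := by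
  unfold BT
  rw [Finset.mul_sum]
  exact Finset.sum_congr rfl fun k _ => by ring

lemma Tneg1_succ (x : ℕ → ℝ) (n : ℕ) : Tneg1 x (n + 1) = (1 / 2) * (Tneg1 x n + x n) := by
  unfold Tneg1
  rw [Finset.sum_range_succ, mul_add, Finset.mul_sum]
  congr 1
  · apply Finset.sum_congr rfl
    intro k hk
    have : n + 1 - k = (n - k) + 1 := by
      have := Finset.mem_range.1 hk
      omega
    rw [this, pow_succ]
    ring
  · simp

lemma BT_Tneg1 (x : ℕ → ℝ) (h : ∀ n, BT x n = x n) (n : ℕ) : BT (Tneg1 x) n = - Tneg1 x n := by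
  induction n with
  | zero => simp [BT, Tneg1]
  | succ n ih =>
    rw [BT_succ]
    simp only [Tneg1_succ]
    rw [BT_smul, BT_add, ih, h]
    ring

lemma Qmat_zero {i j : ℕ} (h : i < j) : Qmat i j = 0 := by
  unfold Qmat
  rw [if_neg (by omega)]
  split_ifs with hi
  · rfl
  · rw [Nat.choose_eq_zero_of_lt h, Nat.choose_eq_zero_of_lt (by omega)]
    simp

lemma Qmat_pascal (m j : ℕ) : Qmat (m + 1) (j + 1) = Qmat m (j + 1) + Qmat m j := by
  rcases m with _ | m <;> rcases j with _ | j
  · norm_num [Qmat]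
  · simp [Qmat, Nat.choose_eq_zero_of_lt]
  · simp [Qmat]
  · simp [Qmat, Nat.choose_succ_succ]
    ring

lemma T1_eq (x : ℕ → ℝ) (n N : ℕ) (h : n / 2 + 1 ≤ N) :
    T1 x n = ∑ j ∈ Finset.range N, Qmat (n - j) j * x j := by
  unfold T1
  apply Finset.sum_subset
  · intro a ha
    simp only [Finset.mem_range] at *
    omega
  · intro j _ hj
    simp only [Finset.mem_range] at hj
    rw [Qmat_zero (by omega), zero_mul]

lemma T1_rec (x : ℕ → ℝ) (n : ℕ) :
    T1 x (n + 2) = T1 x (n + 1) + T1 (fun k => x (k + 1)) n := by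
  rw [T1_eq x (n + 2) (n + 2) (by omega), T1_eq x (n + 1) (n + 2) (by omega),
    T1_eq _ n (n + 1) (by omega), Finset.sum_range_succ', Finset.sum_range_succ' _ (n + 1),
    add_right_comm, ← Finset.sum_add_distrib]
  congr 1
  · apply Finset.sum_congr rfl
    intro j hj
    have := Finset.mem_range.1 hj
    have e1 : n + 2 - (j + 1) = (n - j) + 1 := by omega
    have e2 : n + 1 - (j + 1) = n - j := by omega
    rw [e1, e2, Qmat_pascal]
    ring

lemma BT_rec (y u : ℕ → ℝ) (h : ∀ n, y (n + 2) = y (n + 1) + u n) (n : ℕ) :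
    BT y (n + 2) = BT y (n + 1) + BT u n := by
  have h1 := BT_succ y (n + 1)
  have h2 := BT_succ (fun k => y (k + 1)) n
  have h3 : BT (fun k => y (k + 1 + 1)) n = BT (fun k => y (k + 1)) n + BT u n := by
    rw [← BT_add]
    congr 1
    funext k
    exact h k
  rw [h1, h2, h3]
  ring

lemma BT_T1 (n : ℕ) : ∀ x : ℕ → ℝ, BT (T1 x) n = T1 x n := by
  induction n using Nat.strong_induction_on with
  | _ n ih =>
    intro x
    match n, ih with
    | 0, _ => simp [BT]
    | 1, _ =>
      simp [BT, T1, Qmat, Finset.sum_range_succ]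
      ring
    | n + 2, ih =>
      rw [BT_rec _ _ (T1_rec x), T1_rec, ih (n + 1) (by omega), ih n (by omega)]

/-- for `m ≥ 1`, `z = applyT m x` is an invariant sequence of the
first kind when `m` is odd and an inverse invariant sequence of the first kind
when `m` is even. -/
theorem stmt16 (x : ℕ → ℝ) (m : ℕ) (hm : 1 ≤ m) :
    (Odd m → ∀ n, ∑ k ∈ Finset.range (n + 1),
        (Nat.choose n k : ℝ) * (-1) ^ k * applyT m x k = applyT m x n) ∧
    (Even m → ∀ n, ∑ k ∈ Finset.range (n + 1),
        (Nat.choose n k : ℝ) * (-1) ^ k * applyT m x k = -applyT m x n) := by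
  have hodd : ∀ m, Odd m → ∀ n, BT (applyT m x) n = applyT m x n := by
    intro m hm n
    obtain ⟨k, rfl⟩ := hm
    have : applyT (2 * k + 1) x = T1 (applyT (2 * k) x) := by
      rw [applyT, if_pos (by omega)]
    rw [this]
    exact BT_T1 n _
  refine ⟨hodd m, ?_⟩
  intro he n
  obtain ⟨k, rfl⟩ : ∃ k, m = k + 1 := ⟨m - 1, by omega⟩
  have h2 : (k + 1) % 2 = 0 := Nat.even_iff.1 he
  have : applyT (k + 1) x = Tneg1 (applyT k x) := by
    rw [applyT, if_neg (by omega)]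
  rw [this]
  exact BT_Tneg1 _ (hodd k (Nat.odd_iff.2 (by omega))) n
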